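/- For every z > 0 and every n ≥ 1, the endpoint evaluation of the monic orthogonal polynomial P_n for the weight e^{−x⁴} on [−z, z] satisfies 2z·P_n(z)²·e^{−z⁴} = [ (2n+1) − 4·( γ_{n+2}γ_{n+1} + (γ_n + γ_{n+1})² + γ_n·γ_{n−1} ) ]·h_n. -/

import Mathlib

open Polynomial in
/-- Integration of a polynomial against the truncated Freud weight. -/
noncomputable def freudL (z : ℝ) : Polynomial ℝ →ₗ[ℝ] ℝ where
  toFun q := ∫ x in (-z)..z, q.eval x * Real.exp (-x ^ 4)
  map_add' p q := by
    rw [← intervalIntegral.integral_add]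
    · congr 1; ext x; simp; ring
    · exact (by fun_prop : Continuous fun x : ℝ => p.eval x * Real.exp (-x ^ 4)).intervalIntegrable _ _
    · exact (by fun_prop : Continuous fun x : ℝ => q.eval x * Real.exp (-x ^ 4)).intervalIntegrable _ _
  map_smul' c p := by
    simp only [RingHom.id_apply, smul_eq_mul]
    rw [← intervalIntegral.integral_const_mul]
    congr 1; ext x; simp; ring

theorem freudL_C_mul (z c : ℝ) (q : Polynomial ℝ) :
    freudL z (Polynomial.C c * q) = c * freudL z q := by
  rw [← Polynomial.smul_eq_C_mul, map_smul, smul_eq_mul]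

open Polynomial in
/-- Integration by parts. -/
theorem freudL_parts (z : ℝ) (q : Polynomial ℝ) :
    freudL z (derivative q - C 4 * (X ^ 3 * q)) =
      q.eval z * Real.exp (-z ^ 4) - q.eval (-z) * Real.exp (-z ^ 4) := by
  have key : ∀ x ∈ Set.uIcc (-z) z,
      HasDerivAt (fun x : ℝ => q.eval x * Real.exp (-x ^ 4))
        ((derivative q - C 4 * (X ^ 3 * q)).eval x * Real.exp (-x ^ 4)) x := by
    intro x _
    have h1 := q.hasDerivAt x
    have h2 := ((hasDerivAt_pow 4 x).fun_neg).exp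
    refine (h1.mul h2).congr_deriv ?_
    simp
    ring
  have h3 := intervalIntegral.integral_eq_sub_of_hasDerivAt key
    ((by fun_prop : Continuous fun x : ℝ =>
      (derivative q - C 4 * (X ^ 3 * q)).eval x * Real.exp (-x ^ 4)).intervalIntegrable _ _)
  have e : (-z) ^ 4 = z ^ 4 := by ring
  rw [e] at h3
  exact h3


/-- Endpoint evaluation identity for the monic orthogonal polynomial `P_n` for
the weight `e^{-x⁴}` on `[-z, z]`:
`2z·P_n(z)²·e^{-z⁴} = ((2n+1) - 4(γ_{n+2}γ_{n+1} + (γ_n+γ_{n+1})² + γ_nγ_{n-1}))·h_n`. -/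
theorem truncated_freud_endpoint_square (z : ℝ) (hz : 0 < z)
    (P : ℕ → Polynomial ℝ) (γ h : ℕ → ℝ)
    (hmonic : ∀ n, (P n).Monic)
    (hdeg : ∀ n, (P n).natDegree = n)
    (horth : ∀ m n, m ≠ n →
      ∫ x in (-z)..z, (P m).eval x * (P n).eval x * Real.exp (-x ^ 4) = 0)
    (hh : ∀ n, h n = ∫ x in (-z)..z, ((P n).eval x) ^ 2 * Real.exp (-x ^ 4))
    (hhpos : ∀ n, 0 < h n)
    (hP0 : P 0 = 1) (hP1 : P 1 = Polynomial.X)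
    (hrec : ∀ n, Polynomial.X * P (n + 1) = P (n + 2) + Polynomial.C (γ (n + 1)) * P n)
    (hγ0 : γ 0 = 0)
    (hγ : ∀ n, γ (n + 1) = h (n + 1) / h n)
    (n : ℕ) (hn : 1 ≤ n) :
    2 * z * ((P n).eval z) ^ 2 * Real.exp (-z ^ 4) =
      ((2 * (n : ℝ) + 1)
          - 4 * (γ (n + 2) * γ (n + 1) + (γ n + γ (n + 1)) ^ 2 + γ n * γ (n - 1))) * h n := by
  have hoL : ∀ m n, m ≠ n → freudL z (P m * P n) = 0 := by
    intro m n hmn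
    rw [← horth m n hmn]
    simp [freudL]
  have hhL : ∀ n, freudL z (P n * P n) = h n := by
    intro n
    rw [hh n]
    simp [freudL, sq]
  -- orthogonality to lower degree
  have hlow : ∀ d, d ≤ n → ∀ q : Polynomial ℝ, (∀ m, d ≤ m → q.coeff m = 0) →
      freudL z (q * P n) = 0 := by
    intro d
    induction d with
    | zero =>
      intro _ q hq
      have : q = 0 := by ext m; simpa using hq m (Nat.zero_le m)
      simp [this]
    | succ d ih =>
      intro hd q hq
      have h1 := ih (by omega) (q - Polynomial.C (q.coeff d) * P d) (by
        intro m hm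
        rcases hm.eq_or_lt with rfl | hm
        · have := (hmonic d).coeff_natDegree
          rw [hdeg] at this
          simp [this]
        · have : (P d).coeff m = 0 :=
            Polynomial.coeff_eq_zero_of_natDegree_lt (by rw [hdeg]; exact hm)
          simp [this, hq m hm])
      have h2 : q * P n = (q - Polynomial.C (q.coeff d) * P d) * P n
          + Polynomial.C (q.coeff d) * (P d * P n) := by ring
      rw [h2, map_add, h1, freudL_C_mul, hoL d n (by omega)]
      simp
  -- parity
  have hpar : ∀ k, (P k).eval (-z) = (-1) ^ k * (P k).eval z ∧
      (P (k + 1)).eval (-z) = (-1) ^ (k + 1) * (P (k + 1)).eval z := by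
    intro k
    induction k with
    | zero => simp [hP0, hP1]
    | succ k ih =>
      refine ⟨ih.2, ?_⟩
      have e : P (k + 2) = Polynomial.X * P (k + 1) - Polynomial.C (γ (k + 1)) * P k := by
        rw [hrec k]; ring
      change (P (k + 2)).eval (-z) = (-1) ^ (k + 2) * (P (k + 2)).eval z
      rw [e]
      simp only [Polynomial.eval_sub, Polynomial.eval_mul, Polynomial.eval_X, Polynomial.eval_C,
        ih.1, ih.2]
      ring
  have hpar2 : (P n).eval (-z) ^ 2 = (P n).eval z ^ 2 := by
    rw [(hpar n).1, mul_pow, ← pow_mul, mul_comm n 2, pow_mul]; simp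
  -- derivative term
  have hder : freudL z (Polynomial.X * Polynomial.derivative (P n) * P n) = n * h n := by
    have h1 := hlow n le_rfl
      (Polynomial.X * Polynomial.derivative (P n) - Polynomial.C (n : ℝ) * P n) (by
        intro m hm
        obtain ⟨k, rfl⟩ : ∃ k, m = k + 1 := ⟨m - 1, by omega⟩
        rw [Polynomial.coeff_sub, Polynomial.coeff_X_mul, Polynomial.coeff_derivative,
          Polynomial.coeff_C_mul]
        rcases hm.eq_or_lt with hm | hm
        · rw [hm]; push_cast; ring
        · rw [Polynomial.coeff_eq_zero_of_natDegree_lt (by rw [hdeg]; exact hm)]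
          simp)
    rw [sub_mul, map_sub, mul_assoc (Polynomial.C (n : ℝ)), freudL_C_mul, hhL] at h1
    linarith
  have hratio : ∀ k, h (k + 1) = γ (k + 1) * h k := by
    intro k
    rw [hγ k, div_mul_cancel₀ _ (hhpos k).ne']
  -- quartic term
  have hquart : freudL z ((Polynomial.X ^ 2 * P n) * (Polynomial.X ^ 2 * P n)) =
      (γ (n + 2) * γ (n + 1) + (γ n + γ (n + 1)) ^ 2 + γ n * γ (n - 1)) * h n := by
    obtain ⟨k, rfl⟩ : ∃ k, n = k + 1 := ⟨n - 1, by omega⟩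
    have e3 : h (k + 3) = γ (k + 3) * (γ (k + 2) * h (k + 1)) := by
      rw [hratio (k + 2), hratio (k + 1)]
    have hX : ∀ j, Polynomial.X * P (j + 1) = P (j + 2) + Polynomial.C (γ (j + 1)) * P j := hrec
    have e1 : Polynomial.X ^ 2 * P (k + 1) = P (k + 3)
        + Polynomial.C (γ (k + 1) + γ (k + 2)) * P (k + 1)
        + Polynomial.C (γ (k + 1)) * (Polynomial.X * P k - P (k + 1)) := by
      have a := hrec k
      have b := hrec (k + 1)
      rw [Polynomial.C_add]
      linear_combination Polynomial.X * a + b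
    rcases k with _ | j
    · have e2 : Polynomial.X * P 0 - P (0 + 1) = 0 := by simp [hP0, hP1]
      rw [e2, mul_zero, add_zero] at e1
      rw [e1]
      set c := γ (0 + 1) + γ (0 + 2)
      have : (P (0 + 3) + Polynomial.C c * P (0 + 1)) * (P (0 + 3) + Polynomial.C c * P (0 + 1))
        = P (0 + 3) * P (0 + 3) + Polynomial.C (2 * c) * (P (0 + 3) * P (0 + 1))
          + Polynomial.C (c ^ 2) * (P (0 + 1) * P (0 + 1)) := by
        simp only [Polynomial.C_mul, Polynomial.C_pow, Polynomial.C_ofNat]; ring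
      rw [this]
      simp only [map_add, freudL_C_mul, hhL]
      rw [hoL (0 + 3) (0 + 1) (by omega), e3]
      have g0 : γ (0 + 1 - 1) = 0 := by simpa using hγ0
      rw [g0]
      simp only [c]
      ring
    · have e2 : Polynomial.X * P (j + 1) - P (j + 1 + 1) = Polynomial.C (γ (j + 1)) * P j := by
        rw [hrec j]; ring
      rw [e2, ← mul_assoc, ← Polynomial.C_mul] at e1
      rw [e1]
      have e4 : h (j + 1 + 1) = γ (j + 2) * (γ (j + 1) * h j) := by
        rw [hratio (j + 1), hratio j]
      have e5 : γ (j + 1 + 1 - 1) = γ (j + 1) := rfl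
      set c := γ (j + 1 + 1) + γ (j + 1 + 2) with hc
      set d := γ (j + 1 + 1) * γ (j + 1) with hd
      have : (P (j + 1 + 3) + Polynomial.C c * P (j + 1 + 1) + Polynomial.C d * P j)
          * (P (j + 1 + 3) + Polynomial.C c * P (j + 1 + 1) + Polynomial.C d * P j)
        = P (j + 1 + 3) * P (j + 1 + 3)
          + Polynomial.C (2 * c) * (P (j + 1 + 3) * P (j + 1 + 1))
          + Polynomial.C (2 * d) * (P (j + 1 + 3) * P j)
          + Polynomial.C (2 * c * d) * (P (j + 1 + 1) * P j)
          + Polynomial.C (c ^ 2) * (P (j + 1 + 1) * P (j + 1 + 1))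
          + Polynomial.C (d ^ 2) * (P j * P j) := by
        simp only [Polynomial.C_mul, Polynomial.C_pow, Polynomial.C_ofNat]; ring
      rw [this]
      simp only [map_add, freudL_C_mul, hhL]
      rw [hoL (j + 1 + 3) (j + 1 + 1) (by omega), hoL (j + 1 + 3) j (by omega),
        hoL (j + 1 + 1) j (by omega), e3, e5]
      have e6 : d * h j = h (j + 1 + 1) := by rw [e4, hd]; ring
      linear_combination d * e6
  have hparts := freudL_parts z (Polynomial.X * P n * P n)
  have e : Polynomial.derivative (Polynomial.X * P n * P n)
        - Polynomial.C 4 * (Polynomial.X ^ 3 * (Polynomial.X * P n * P n))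
      = P n * P n + Polynomial.C 2 * (Polynomial.X * Polynomial.derivative (P n) * P n)
        - Polynomial.C 4 * ((Polynomial.X ^ 2 * P n) * (Polynomial.X ^ 2 * P n)) := by
    simp only [Polynomial.derivative_mul, Polynomial.derivative_X, Polynomial.C_ofNat]
    ring
  rw [e, map_sub, map_add, freudL_C_mul, freudL_C_mul, hder, hquart, hhL] at hparts
  simp only [Polynomial.eval_mul, Polynomial.eval_X] at hparts
  linear_combination -hparts - z * Real.exp (-z ^ 4) * hpar2
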